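/- Let d = (d_1,...,d_n) be a non-increasing sequence of positive integers with d_1 ≥ 2 and ∑ d_i = 2n - 2c for a positive integer c. If n_1(d) ≤ n_{≥2}(d), then the maximum of the domination number γ(F) over all forests F with degree sequence d equals ⌈(n + n_1(d) - 2)/3⌉. -/

import Mathlib

open SimpleGraph Finset

/-- The degree of a vertex `v` in a simple graph `G`. -/
noncomputable def deg {V : Type*} [Fintype V] (G : SimpleGraph V) (v : V) : ℕ :=
  Nat.card {u // G.Adj v u}

/-- The degree sequence of `G` as a multiset. -/
noncomputable def degSeq {V : Type*} [Fintype V] (G : SimpleGraph V) : Multiset ℕ :=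
  Finset.univ.val.map (deg G)

/-- `D` is a dominating set of `G`. -/
def IsDomSet {V : Type*} (G : SimpleGraph V) (D : Set V) : Prop :=
  ∀ v ∉ D, ∃ u ∈ D, G.Adj u v

/-- The domination number of `G`. -/
noncomputable def domNum {V : Type*} [Fintype V] (G : SimpleGraph V) : ℕ :=
  sInf {k | ∃ D : Set V, IsDomSet G D ∧ D.ncard = k}

/-- `I` is an independent set of `G`. -/
def IsIndepSet' {V : Type*} (G : SimpleGraph V) (I : Set V) : Prop :=
  ∀ u ∈ I, ∀ v ∈ I, ¬ G.Adj u v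

/-- The independence number of `G`. -/
noncomputable def indepNum {V : Type*} [Fintype V] (G : SimpleGraph V) : ℕ :=
  sSup {k | ∃ I : Set V, IsIndepSet' G I ∧ I.ncard = k}

/-- `v` is a support vertex of `G`: degree at least 2 with a neighbor of degree 1. -/
noncomputable def IsSupport {V : Type*} [Fintype V] (G : SimpleGraph V) (v : V) : Prop :=
  2 ≤ deg G v ∧ ∃ u, G.Adj v u ∧ deg G u = 1

namespace SimpleGraph

variable {V : Type*}

lemma IsAcyclic.of_induce_compl_singleton {G : SimpleGraph V} (w : V)
    (h : (G.induce {w}ᶜ).IsAcyclic) (hw : ∀ a b, G.Adj w a → G.Adj w b → a = b) :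
    G.IsAcyclic := by
  classical
  intro u c hc
  have hmem : w ∉ c.support := by
    intro hmem
    have hc' : (c.rotate w hmem).IsCycle := hc.rotate hmem
    exact hc'.snd_ne_penultimate (hw _ _ ((c.rotate w hmem).adj_snd hc'.not_nil)
      ((c.rotate w hmem).adj_penultimate hc'.not_nil).symm)
  have hs : ∀ x ∈ c.support, x ∈ ({w}ᶜ : Set V) := by
    rintro x hx rfl
    exact hmem hx
  refine h (c.induce _ hs) (Walk.IsCycle.of_map (f := (Embedding.induce _).toHom) ?_)
  rw [Walk.map_induce]
  exact hc

lemma IsAcyclic.exists_mem_forall_adj_eq [Finite V] {G : SimpleGraph V} (hG : G.IsAcyclic)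
    {s : Set V} (hs : s.Nonempty) :
    ∃ w ∈ s, ∀ a ∈ s, ∀ b ∈ s, G.Adj w a → G.Adj w b → a = b := by
  have : Nonempty s := hs.to_subtype
  obtain ⟨u, v, p, hp, hmax⟩ := Walk.exists_isPath_forall_isPath_length_le_length (G.induce s)
  have key : ∀ w, (G.induce s).Adj v w → w = p.penultimate := by
    intro w hadj
    apply (hG.induce s).eq_penultimate_of_adj_end hp hadj
    have : ¬(p.concat hadj).IsPath := by grind [Walk.length_concat]
    grind [hp.concat]
  refine ⟨v, v.2, fun a ha b hb hva hvb => ?_⟩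
  have h1 := key ⟨a, ha⟩ hva
  have h2 := key ⟨b, hb⟩ hvb
  exact congrArg Subtype.val (h1.trans h2.symm)

/-- Every forest has a proper 3-colouring in which each vertex with two neighbours
sees two colours in its neighbourhood. -/
lemma IsAcyclic.exists_coloring [Finite V] {G : SimpleGraph V} (hG : G.IsAcyclic)
    (s : Finset V) : ∃ f : V → Fin 3, (∀ u ∈ s, ∀ v ∈ s, G.Adj u v → f u ≠ f v) ∧
      ∀ v ∈ s, ∀ x ∈ s, ∀ y ∈ s, G.Adj v x → G.Adj v y → x ≠ y →
        ∃ x' ∈ s, ∃ y' ∈ s, G.Adj v x' ∧ G.Adj v y' ∧ f x' ≠ f y' := by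
  classical
  induction s using Finset.strongInduction with
  | H s ih =>
  rcases s.eq_empty_or_nonempty with rfl | hs
  · exact ⟨fun _ => 0, by simp, by simp⟩
  obtain ⟨w, hws, hw⟩ := hG.exists_mem_forall_adj_eq (s := (s : Set V)) hs
  simp only [Finset.mem_coe] at hws hw
  obtain ⟨f, hf, hf'⟩ := ih (s.erase w) (Finset.erase_ssubset hws)
  by_cases hu : ∃ u ∈ s, G.Adj w u
  swap
  · push Not at hu
    refine ⟨f, fun u hus v hvs huv => hf u ?_ v ?_ huv, fun v hvs x hxs y hys hvx hvy hxy => ?_⟩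
    · exact mem_erase.mpr ⟨fun h => hu v hvs (h ▸ huv), hus⟩
    · exact mem_erase.mpr ⟨fun h => hu u hus (h ▸ huv.symm), hvs⟩
    · have hvw : v ≠ w := fun h => hu x hxs (h ▸ hvx)
      have hxw : x ≠ w := fun h => hu v hvs (h ▸ hvx.symm)
      have hyw : y ≠ w := fun h => hu v hvs (h ▸ hvy.symm)
      obtain ⟨x', hx', y', hy', h⟩ := hf' v (by grind) x (by grind) y (by grind) hvx hvy hxy
      exact ⟨x', by grind, y', by grind, h⟩
  obtain ⟨u, hus, hwu⟩ := hu
  have huw : u ≠ w := hwu.ne'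
  have fin3 : ∀ a b : Fin 3, ∃ k, k ≠ a ∧ k ≠ b := by decide
  obtain ⟨k, hku, hkx⟩ : ∃ k, k ≠ f u ∧ ((∃ x ∈ s, x ≠ w ∧ G.Adj u x) →
      ∃ x ∈ s, x ≠ w ∧ G.Adj u x ∧ k ≠ f x) := by
    by_cases hx : ∃ x ∈ s, x ≠ w ∧ G.Adj u x
    · obtain ⟨x, hx⟩ := hx
      obtain ⟨k, h1, h2⟩ := fin3 (f u) (f x)
      exact ⟨k, h1, fun _ => ⟨x, hx.1, hx.2.1, hx.2.2, h2⟩⟩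
    · obtain ⟨k, h1, -⟩ := fin3 (f u) (f u)
      exact ⟨k, h1, fun h => absurd h hx⟩
  have hw' : ∀ a ∈ s, G.Adj w a → a = u := fun a ha hwa => hw a ha u hus hwa hwu
  refine ⟨Function.update f w k, fun a ha b hb hab => ?_, fun v hvs x hxs y hys hvx hvy hxy => ?_⟩
  · by_cases haw : a = w
    · subst haw
      obtain rfl := hw' b hb hab
      simpa [Function.update_of_ne huw] using hku
    by_cases hbw : b = w
    · subst hbw
      obtain rfl := hw' a ha hab.symm
      simpa [Function.update_of_ne huw] using hku.symm
    rw [Function.update_of_ne haw, Function.update_of_ne hbw]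
    exact hf a (by grind) b (by grind) hab
  · by_cases hvw : v = w
    · subst hvw
      exact absurd (hw x hxs y hys hvx hvy) hxy
    by_cases hvu : v = u
    · subst hvu
      have : ∃ x ∈ s, x ≠ w ∧ G.Adj v x := by
        by_cases hxw : x = w
        · exact ⟨y, hys, by grind, hvy⟩
        · exact ⟨x, hxs, hxw, hvx⟩
      obtain ⟨x0, hx0, hx0w, hvx0, hk⟩ := hkx this
      refine ⟨w, hws, x0, hx0, hwu.symm, hvx0, ?_⟩
      simpa [Function.update_of_ne hx0w] using hk
    · have hxw : x ≠ w := by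
        rintro rfl
        exact hvu (hw' v hvs hvx.symm)
      have hyw : y ≠ w := by
        rintro rfl
        exact hvu (hw' v hvs hvy.symm)
      obtain ⟨x', hx', y', hy', h1, h2, h3⟩ := hf' v (by grind) x (by grind) y (by grind) hvx hvy hxy
      rw [Finset.mem_erase] at hx' hy'
      refine ⟨x', hx'.2, y', hy'.2, h1, h2, ?_⟩
      rwa [Function.update_of_ne hx'.1, Function.update_of_ne hy'.1]

/-- The graph obtained by adding a vertex `none`, joined to the vertex in `o` if there is one. -/
def attach (G : SimpleGraph V) (o : Option V) : SimpleGraph (Option V) where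
  Adj x y := (∃ a b, x = some a ∧ y = some b ∧ G.Adj a b) ∨
    (x = none ∧ y ≠ none ∧ y = o) ∨ (y = none ∧ x ≠ none ∧ x = o)
  symm := ⟨by
    rintro x y (⟨a, b, h1, h2, h3⟩ | h | h)
    · exact Or.inl ⟨b, a, h2, h1, h3.symm⟩
    · exact Or.inr (Or.inr h)
    · exact Or.inr (Or.inl h)⟩
  loopless := ⟨by
    rintro x (⟨a, b, h1, h2, h3⟩ | h | h)
    · exact h3.ne (Option.some_injective _ (h1.symm.trans h2))
    · exact h.2.1 h.1
    · exact h.2.1 h.1⟩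

@[simp] lemma attach_adj_some_some (G : SimpleGraph V) (o : Option V) (a b : V) :
    (G.attach o).Adj (some a) (some b) ↔ G.Adj a b := by
  simp [attach]

@[simp] lemma attach_adj_some_none (G : SimpleGraph V) (o : Option V) (a : V) :
    (G.attach o).Adj (some a) none ↔ some a = o := by
  simp [attach]

@[simp] lemma attach_adj_none_some (G : SimpleGraph V) (o : Option V) (a : V) :
    (G.attach o).Adj none (some a) ↔ some a = o := by
  simp [attach]

lemma IsAcyclic.attach {G : SimpleGraph V} (hG : G.IsAcyclic) (o : Option V) :
    (G.attach o).IsAcyclic := by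
  refine IsAcyclic.of_induce_compl_singleton none ?_ ?_
  · have hne : ∀ x : ({none}ᶜ : Set (Option V)), x.1.isSome := by
      rintro ⟨x, hx⟩
      exact Option.ne_none_iff_isSome.mp hx
    refine IsAcyclic.comap (G' := G) ⟨fun x => x.1.get (hne x), ?_⟩ ?_ hG
    · rintro ⟨_ | x, hx⟩ ⟨_ | y, hy⟩ h
      · exact absurd rfl hx
      · exact absurd rfl hx
      · exact absurd rfl hy
      · simpa using h
    · rintro ⟨_ | x, hx⟩ ⟨_ | y, hy⟩ h
      · exact absurd rfl hx
      · exact absurd rfl hx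
      · exact absurd rfl hy
      · simpa using h
  · rintro (_ | a) (_ | b) <;> simp
    rintro rfl h
    exact Option.some_injective _ h.symm

end SimpleGraph

section Degree

variable {V : Type*} [Fintype V]

lemma deg_eq_ncard (G : SimpleGraph V) (v : V) : deg G v = {u | G.Adj v u}.ncard := rfl

lemma deg_attach_none (G : SimpleGraph V) (o : Option V) :
    deg (G.attach o) none = if o = none then 0 else 1 := by
  rw [deg_eq_ncard]
  cases o with
  | none =>
    rw [show {u | (G.attach none).Adj none u} = ∅ by ext (_ | u) <;> simp]
    simp
  | some v =>
    rw [show {u | (G.attach (some v)).Adj none u} = {some v} by ext (_ | u) <;> simp]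
    simp

lemma deg_attach_some (G : SimpleGraph V) (o : Option V) (a : V) [Decidable (some a = o)] :
    deg (G.attach o) (some a) = deg G a + if some a = o then 1 else 0 := by
  rw [deg_eq_ncard, deg_eq_ncard]
  split_ifs with h
  · subst h
    rw [show {u | (G.attach (some a)).Adj (some a) u} = insert none (some '' {u | G.Adj a u}) by
      ext (_ | u) <;> simp, Set.ncard_insert_of_notMem (by simp),
      Set.ncard_image_of_injective _ (Option.some_injective _)]
  · rw [show {u | (G.attach o).Adj (some a) u} = some '' {u | G.Adj a u} by
      ext (_ | u) <;> simp [h],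
      Set.ncard_image_of_injective _ (Option.some_injective _)]
    simp

lemma domNum_le_ncard (G : SimpleGraph V) {D : Set V} (hD : IsDomSet G D) :
    domNum G ≤ D.ncard :=
  Nat.sInf_le ⟨D, hD, rfl⟩

/-- A forest without isolated vertices is dominated by a third of the number of its vertices plus
the number of its leaves. -/
lemma three_mul_domNum_le {G : SimpleGraph V} (hG : G.IsAcyclic) (hpos : ∀ v, 0 < deg G v) :
    3 * domNum G ≤ Fintype.card V + (univ.filter fun v => deg G v = 1).card := by
  classical
  obtain ⟨f, hf, hf'⟩ := hG.exists_coloring univ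
  have hf : ∀ u v, G.Adj u v → f u ≠ f v := fun u v => hf u (mem_univ _) v (mem_univ _)
  let D : Fin 3 → Finset V := fun i =>
    univ.filter fun v => f v = i ∨ (deg G v = 1 ∧ ∀ u, G.Adj v u → f u ≠ i)
  have hnb : ∀ v, ∃ u, G.Adj v u := by
    intro v
    have := hpos v
    rw [deg_eq_ncard, Set.ncard_pos] at this
    exact this
  have hdom : ∀ i, IsDomSet G (D i : Set V) := by
    intro i v hv
    simp only [D, coe_filter, mem_univ, true_and, Set.mem_ofPred_eq, not_or, not_and,
      not_forall] at hv ⊢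
    obtain ⟨hvi, hv⟩ := hv
    by_cases h1 : deg G v = 1
    · obtain ⟨u, hvu, hu⟩ := hv h1
      exact ⟨u, Or.inl (not_not.mp hu), hvu.symm⟩
    · have h2 : 1 < {u | G.Adj v u}.ncard := by
        have := hpos v
        rw [← deg_eq_ncard]
        omega
      obtain ⟨x, hx, y, hy, hxy⟩ := (Set.one_lt_ncard).mp h2
      obtain ⟨x', -, y', -, hx', hy', hne⟩ :=
        hf' v (mem_univ _) x (mem_univ _) y (mem_univ _) hx hy hxy
      have fin3 : ∀ a b c i : Fin 3, a ≠ b → a ≠ c → b ≠ c → a ≠ i → b = i ∨ c = i := by decide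
      rcases fin3 _ _ _ i (hf _ _ hx') (hf _ _ hy') hne hvi with h | h
      · exact ⟨x', Or.inl h, hx'.symm⟩
      · exact ⟨y', Or.inl h, hy'.symm⟩
  have hle : ∀ i, domNum G ≤ (D i).card := fun i => by
    simpa using domNum_le_ncard G (hdom i)
  have hsum : ∑ i, (D i).card ≤ Fintype.card V + (univ.filter fun v => deg G v = 1).card := by
    have h1 : ∀ v, (univ.filter fun i => v ∈ D i).card ≤ 1 + if deg G v = 1 then 1 else 0 := by
      intro v
      split_ifs with h
      · obtain ⟨u, hu⟩ := hnb v
        have : (univ.filter fun i => v ∈ D i) ⊆ univ.erase (f u) := by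
          intro i hi
          simp only [D, mem_filter, mem_univ, true_and, mem_erase, and_true] at hi ⊢
          rcases hi with hi | hi
          · exact hi ▸ (hf _ _ hu)
          · exact (hi.2 u hu).symm
        simpa using card_le_card this
      · have : (univ.filter fun i => v ∈ D i) ⊆ {f v} := by
          intro i hi
          simp only [D, mem_filter, mem_univ, true_and, mem_singleton] at hi ⊢
          exact (hi.resolve_right fun h' => h h'.1).symm
        simpa using card_le_card this
    calc ∑ i, (D i).card = ∑ v, (univ.filter fun i => v ∈ D i).card := by
          simpa [Finset.bipartiteAbove, Finset.bipartiteBelow] using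
            Finset.sum_card_bipartiteAbove_eq_sum_card_bipartiteBelow
              (s := (univ : Finset (Fin 3))) (t := (univ : Finset V)) (fun i v => v ∈ D i)
      _ ≤ ∑ v, (1 + if deg G v = 1 then 1 else 0) := sum_le_sum fun v _ => h1 v
      _ = _ := by simp [sum_add_distrib]
  rw [Fin.sum_univ_three] at hsum
  have := hle 0
  have := hle 1
  have := hle 2
  omega

end Degree

section Packing

lemma Finset.univ_val_option (V : Type*) [Fintype V] :
    (univ : Finset (Option V)).val = none ::ₘ (univ : Finset V).val.map some := rfl

/-- A labelling of the vertices of `G` for which the closed neighbourhoods of the vertices labelled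
`2` are pairwise disjoint and contain no vertex labelled `0`. -/
structure IsPackingLabel {V : Type*} (G : SimpleGraph V) (l : V → Fin 3) : Prop where
  eq_of_eq_or_adj : ∀ x p q, l p = 2 → l q = 2 → (x = p ∨ G.Adj p x) → (x = q ∨ G.Adj q x) → p = q
  not_adj : ∀ x p, l x = 0 → l p = 2 → ¬ G.Adj p x

lemma IsPackingLabel.card_le_domNum {V : Type*} [Fintype V] {G : SimpleGraph V} {l : V → Fin 3}
    (hl : IsPackingLabel G l) : (univ.filter fun v => l v = 2).card ≤ domNum G := by
  classical
  have hne : {k | ∃ D : Set V, IsDomSet G D ∧ D.ncard = k}.Nonempty :=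
    ⟨_, Set.univ, fun v hv => absurd (Set.mem_univ v) hv, rfl⟩
  obtain ⟨D, hD, hk⟩ := Nat.sInf_mem hne
  rw [domNum, ← hk]
  have h : ∀ p, ∃ x ∈ D, x = p ∨ G.Adj p x := by
    intro p
    by_cases hp : p ∈ D
    · exact ⟨p, hp, Or.inl rfl⟩
    · obtain ⟨u, hu, hup⟩ := hD p hp
      exact ⟨u, hu, Or.inr hup.symm⟩
  choose g hgD hg using h
  rw [← Set.ncard_coe_finset]
  refine Set.ncard_le_ncard_of_injOn g (fun p _ => hgD p) ?_ (Set.toFinite _)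
  intro p hp q hq hpq
  simp only [coe_filter, mem_univ, true_and, Set.mem_ofPred_eq] at hp hq
  exact hl.eq_of_eq_or_adj (g p) p q hp hq (hg p) (hpq ▸ hg q)

/-- `M` lists the degrees and labels of the vertices of a forest with a packing labelling. -/
def IsForestProfile (M : Multiset (ℕ × Fin 3)) : Prop :=
  ∃ (V : Type) (_ : Fintype V) (G : SimpleGraph V) (l : V → Fin 3), G.IsAcyclic ∧
    IsPackingLabel G l ∧ (univ : Finset V).val.map (fun v => (deg G v, l v)) = M

namespace IsForestProfile

lemma zero : IsForestProfile 0 :=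
  ⟨Empty, inferInstance, ⊥, fun _ => 0, isAcyclic_bot, ⟨fun x => x.elim, fun x => x.elim⟩, rfl⟩

lemma add_isolated {M : Multiset (ℕ × Fin 3)} (hM : IsForestProfile M) :
    IsForestProfile ((0, 0) ::ₘ M) := by
  classical
  obtain ⟨V, _, G, l, hG, hl, rfl⟩ := hM
  refine ⟨Option V, inferInstance, G.attach none, fun x => x.elim 0 l, hG.attach none, ⟨?_, ?_⟩, ?_⟩
  · rintro (_ | x) (_ | p) (_ | q) <;> simp
    exact hl.eq_of_eq_or_adj x p q
  · rintro (_ | x) (_ | p) <;> simp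
    exact hl.not_adj x p
  · rw [univ_val_option, Multiset.map_cons, Multiset.map_map]
    simp [Function.comp_def, deg_attach_none, deg_attach_some]

/-- The admissible relabellings when a new vertex is joined to a vertex labelled `i`: the old vertex
gets label `j` and the new one gets label `k`. -/
lemma add_pendant {M : Multiset (ℕ × Fin 3)} {a : ℕ} {i j k : Fin 3}
    (hM : IsForestProfile ((a, i) ::ₘ M))
    (h : (i = 0 ∧ j = 1 ∧ k = 2) ∨ (i = 1 ∧ j = 1 ∧ k = 0) ∨ (i = 2 ∧ j = 2 ∧ k = 1) ∨
      (i = 2 ∧ j = 1 ∧ k = 2)) :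
    IsForestProfile ((a + 1, j) ::ₘ (1, k) ::ₘ M) := by
  classical
  obtain ⟨V, _, G, l, hG, hl, hM⟩ := hM
  have hmem : (a, i) ∈ (univ : Finset V).val.map (fun v => (deg G v, l v)) := by simp [hM]
  obtain ⟨v, -, hv⟩ := Multiset.mem_map.mp hmem
  obtain ⟨rfl, rfl⟩ := Prod.mk.inj hv
  have huniv : (univ : Finset V).val = v ::ₘ ((univ : Finset V).erase v).val := by
    rw [erase_val, Multiset.cons_erase (mem_univ_val v)]
  rw [huniv, Multiset.map_cons, Multiset.cons_inj_right] at hM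
  subst hM
  refine ⟨Option V, inferInstance, G.attach (some v), fun x => x.elim k (Function.update l v j),
    hG.attach _, ⟨?_, ?_⟩, ?_⟩
  · have h1 := hl.eq_of_eq_or_adj
    have h2 := hl.not_adj
    rintro (_ | x) (_ | p) (_ | q) <;>
      simp only [Option.elim, attach_adj_some_some, attach_adj_some_none, attach_adj_none_some,
        Option.some_inj, reduceCtorEq, false_or, Function.update_apply, SimpleGraph.irrefl]
    all_goals grind
  · have h2 := hl.not_adj
    rintro (_ | x) (_ | p) <;>
      simp only [Option.elim, attach_adj_some_some, attach_adj_some_none, attach_adj_none_some,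
        Option.some_inj, Function.update_apply, SimpleGraph.irrefl]
    all_goals grind
  · rw [univ_val_option, Multiset.map_cons, Multiset.map_map, huniv, Multiset.map_cons,
      Multiset.cons_swap]
    simp only [Function.comp_apply, deg_attach_none, deg_attach_some, Option.elim,
      Function.update_self, if_true, reduceCtorEq, if_false]
    congr 2
    refine Multiset.map_congr rfl fun x hx => ?_
    have hxv : x ≠ v := ne_of_mem_erase (s := univ) hx
    simp [hxv]

lemma add_edge {M : Multiset (ℕ × Fin 3)} (hM : IsForestProfile M) :
    IsForestProfile ((1, 1) ::ₘ (1, 2) ::ₘ M) :=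
  hM.add_isolated.add_pendant (by simp)

lemma add_support {M : Multiset (ℕ × Fin 3)} {a : ℕ} (hM : IsForestProfile ((a, 1) ::ₘ M)) :
    IsForestProfile ((a + 1, 1) ::ₘ (2, 1) ::ₘ (1, 2) ::ₘ M) := by
  have h := hM.add_pendant (j := 1) (k := 0) (by simp)
  rw [Multiset.cons_swap] at h
  have h' := h.add_pendant (j := 1) (k := 2) (by simp)
  rwa [Multiset.cons_swap (1, 2), Multiset.cons_swap] at h'

lemma lengthen_one {M : Multiset (ℕ × Fin 3)} (hM : IsForestProfile ((1, 2) ::ₘ M)) :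
    IsForestProfile ((1, 2) ::ₘ (2, 1) ::ₘ M) := by
  have h := hM.add_pendant (j := 1) (k := 2) (by simp)
  rwa [Multiset.cons_swap] at h

lemma lengthen_three {M : Multiset (ℕ × Fin 3)} (hM : IsForestProfile ((1, 2) ::ₘ M)) :
    IsForestProfile ((1, 2) ::ₘ (2, 1) ::ₘ (2, 1) ::ₘ (2, 2) ::ₘ M) := by
  have h := hM.add_pendant (j := 2) (k := 1) (by simp)
  rw [Multiset.cons_swap] at h
  have h' := h.add_support
  rwa [Multiset.cons_swap (2, 1) (1, 2), Multiset.cons_swap (2, 1) (1, 2)] at h'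

/-- Lengthening a pendant path by `m` vertices. -/
lemma lengthen (m : ℕ) {M : Multiset (ℕ × Fin 3)} (hM : IsForestProfile ((1, 2) ::ₘ M)) :
    IsForestProfile ((1, 2) ::ₘ (Multiset.replicate (m / 3) (2, 2) +
      Multiset.replicate (m - m / 3) (2, 1) + M)) := by
  induction m using Nat.strong_induction_on generalizing M with
  | _ m ih =>
    rcases Nat.lt_or_ge m 3 with hm | hm
    · interval_cases m
      · simpa using hM
      · simpa using hM.lengthen_one
      · simpa [Multiset.replicate_succ] using hM.lengthen_one.lengthen_one
    · obtain ⟨k, rfl⟩ := Nat.exists_eq_add_of_le' hm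
      have := ih k (by omega) hM.lengthen_three
      rw [show (k + 3) / 3 = k / 3 + 1 by omega, show k + 3 - (k / 3 + 1) = k - k / 3 + 1 + 1 by omega]
      simpa [Multiset.replicate_succ, Multiset.cons_swap] using this

/-- The core of the construction: `e` lists the degrees of a forest, and a leaf gets attached to
each of its vertices. -/
lemma corona (e : Multiset ℕ) (hpos : ∀ x ∈ e, 0 < x) (heven : Even e.sum)
    (hsum : e.sum < 2 * e.card ∨ e = 0) :
    IsForestProfile (Multiset.replicate e.card (1, 2) + e.map fun x => (x + 1, 1)) := by
  induction hn : e.card using Nat.strong_induction_on generalizing e with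
  | _ n ih =>
    subst hn
    rcases eq_or_ne e 0 with rfl | he
    · simpa using zero
    have hsum := hsum.resolve_right he
    have h1 : 1 ∈ e := by
      by_contra h1
      have : e.card • 2 ≤ e.sum := Multiset.card_nsmul_le_sum fun x hx => by
        have := hpos x hx
        have : x ≠ 1 := fun h => h1 (h ▸ hx)
        omega
      rw [smul_eq_mul] at this
      omega
    obtain ⟨e', rfl⟩ := Multiset.exists_cons_of_mem h1
    by_cases hx : ∃ x ∈ e', 2 ≤ x
    · obtain ⟨x, hx, hx2⟩ := hx
      obtain ⟨e, rfl⟩ := Multiset.exists_cons_of_mem hx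
      obtain ⟨y, rfl⟩ := Nat.exists_eq_add_of_le' hx2
      simp only [Multiset.sum_cons, Multiset.card_cons, Multiset.mem_cons, forall_eq_or_imp]
        at hsum heven hpos
      have := ih (e.card + 1) (by simp) ((y + 1) ::ₘ e) (by simpa using hpos.2.2)
        (by rw [Multiset.sum_cons]; grind) (Or.inl (by simp; omega)) (by simp)
      rw [Multiset.map_cons, Multiset.add_cons] at this
      have := this.add_support
      convert this using 1
      simp only [Multiset.map_cons, Multiset.card_cons, Multiset.replicate_succ, Multiset.add_cons,
        Multiset.cons_add]
      ext; simp only [Multiset.count_cons, Multiset.count_add]; ring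
    · have hall : ∀ x ∈ e', x = 1 := fun x hx' => by
        have := hpos x (Multiset.mem_cons_of_mem hx')
        by_contra h
        exact hx ⟨x, hx', by omega⟩
      obtain ⟨k, rfl⟩ : ∃ k, e' = Multiset.replicate k 1 := ⟨_, Multiset.eq_replicate_card.mpr hall⟩
      obtain _ | k := k
      · simp at heven
      simp only [Multiset.sum_cons, Multiset.sum_replicate, smul_eq_mul, mul_one] at heven
      have := ih k (by simp) (Multiset.replicate k 1)
        (fun x hx => by rw [Multiset.eq_of_mem_replicate hx]; exact one_pos)
        (by simp; grind) (by rcases k with _ | k <;> simp; omega) (by simp)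
      have := this.add_edge.add_support
      convert this using 1
      simp only [Multiset.map_cons, Multiset.card_cons, Multiset.replicate_succ, Multiset.add_cons,
        Multiset.cons_add, Multiset.card_replicate]

end IsForestProfile

end Packing

section Realization

lemma IsForestProfile.exists_of_degrees {D : Multiset ℕ} {c : ℕ} (hc : 0 < c)
    (hpos : ∀ x ∈ D, 0 < x) (hsum : D.sum + 2 * c = 2 * D.card)
    (h12 : D.count 1 ≤ D.countP (2 ≤ ·)) :
    ∃ M, IsForestProfile M ∧ M.map Prod.fst = D ∧
      (D.card + D.count 1) / 3 ≤ M.countP (fun x => x.2 = 2) := by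
  obtain ⟨a, k, E, hE, rfl⟩ : ∃ (a k : ℕ) (E : Multiset ℕ), (∀ x ∈ E, 2 ≤ x) ∧
      D = Multiset.replicate a 1 + (Multiset.replicate k 2 + E.map (· + 1)) := by
    refine ⟨D.count 1, D.count 2, (D.filter (3 ≤ ·)).map (· - 1), ?_, ?_⟩
    · simp only [Multiset.mem_map, Multiset.mem_filter]
      rintro _ ⟨x, ⟨-, hx⟩, rfl⟩
      omega
    · have hmap : ((D.filter (3 ≤ ·)).map (· - 1)).map (· + 1) = D.filter (3 ≤ ·) := by
        rw [Multiset.map_map]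
        refine (Multiset.map_congr rfl fun x hx => ?_).trans (Multiset.map_id _)
        have := (Multiset.mem_filter.mp hx).2
        simp only [Function.comp_apply, id_eq]
        omega
      rw [hmap]
      ext x
      simp only [Multiset.count_add, Multiset.count_replicate, Multiset.count_filter]
      rcases x with _ | _ | _ | x
      · have : 0 ∉ D := fun h => (hpos 0 h).false
        simp [this]
      · simp
      · simp
      · simp
  have hE1 : 1 ∉ E.map (· + 1) := by
    simp only [Multiset.mem_map, not_exists, not_and]
    intro x hx
    have := hE x hx
    omega
  have hcount : (Multiset.replicate a 1 + (Multiset.replicate k 2 + E.map (· + 1))).count 1 = a := by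
    simp only [Multiset.count_add, Multiset.count_eq_zero_of_notMem hE1, Multiset.count_replicate]
    simp
  have hcountP : (Multiset.replicate a 1 + (Multiset.replicate k 2 + E.map (· + 1))).countP (2 ≤ ·)
      = k + E.card := by
    have h1 : (Multiset.replicate a 1).countP (2 ≤ ·) = 0 :=
      Multiset.countP_eq_zero.mpr fun x hx => by simp [Multiset.eq_of_mem_replicate hx]
    have h2 : (Multiset.replicate k 2).countP (2 ≤ ·) = k := by
      rw [Multiset.countP_eq_card.mpr fun x hx => by simp [Multiset.eq_of_mem_replicate hx],
        Multiset.card_replicate]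
    have h3 : (E.map (· + 1)).countP (2 ≤ ·) = E.card := by
      rw [Multiset.countP_eq_card.mpr, Multiset.card_map]
      simp only [Multiset.mem_map]
      rintro _ ⟨x, hx, rfl⟩
      have := hE x hx
      omega
    rw [Multiset.countP_add, Multiset.countP_add, h1, h2, h3, zero_add]
  rw [hcount, hcountP] at h12
  rw [hcount]
  have hEsum : E.card • 2 ≤ E.sum := Multiset.card_nsmul_le_sum hE
  simp only [Multiset.sum_add, Multiset.sum_replicate, smul_eq_mul, Multiset.sum_map_add,
    Multiset.map_id', Multiset.map_const', Multiset.card_add, Multiset.card_replicate,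
    Multiset.card_map] at hsum hEsum ⊢
  have hcard : (E + Multiset.replicate (a - E.card) 1).card = a := by
    simp only [Multiset.card_add, Multiset.card_replicate]
    omega
  have hcorona := corona (E + Multiset.replicate (a - E.card) 1)
    (by
      intro x hx
      rcases Multiset.mem_add.mp hx with hx | hx
      · have := hE x hx
        omega
      · rw [Multiset.eq_of_mem_replicate hx]
        exact one_pos)
    ⟨a - c, by simp only [Multiset.sum_add, Multiset.sum_replicate, smul_eq_mul]; omega⟩
    (Or.inl (by
      rw [hcard]
      simp only [Multiset.sum_add, Multiset.sum_replicate, smul_eq_mul]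
      omega))
  rw [hcard] at hcorona
  obtain ⟨b, rfl⟩ : ∃ b, a = b + 1 := ⟨a - 1, by omega⟩
  rw [Multiset.replicate_succ, Multiset.cons_add] at hcorona
  obtain ⟨m, hm⟩ : ∃ m, m + (b + 1) = k + E.card := ⟨k + E.card - (b + 1), by omega⟩
  refine ⟨_, hcorona.lengthen m, ?_, ?_⟩
  · have hk : k = m / 3 + (m - m / 3) + (b + 1 - E.card) := by omega
    simp only [Multiset.map_cons, Multiset.map_add, Multiset.map_replicate, Multiset.map_map,
      Function.comp_def]
    rw [hk, Multiset.replicate_add (m / 3 + (m - m / 3)), Multiset.replicate_add (m / 3),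
      Multiset.replicate_succ _ b, Multiset.cons_add]
    congr 1
    abel
  · simp only [Multiset.countP_cons, Multiset.countP_add, Multiset.countP_map]
    have h : ∀ (t : ℕ) (x : ℕ), (Multiset.replicate t (x, (2 : Fin 3))).countP (fun x => x.2 = 2) = t := by
      intro t x
      rw [Multiset.countP_eq_card.mpr fun y hy => by simp [Multiset.eq_of_mem_replicate hy],
        Multiset.card_replicate]
    rw [h, h, if_pos trivial]
    omega

lemma SimpleGraph.Iso.deg_eq {V W : Type*} [Fintype V] [Fintype W] {G : SimpleGraph V}
    {H : SimpleGraph W} (φ : G ≃g H) (v : V) : deg H (φ v) = deg G v :=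
  (Nat.card_congr (φ.toEquiv.subtypeEquiv fun _ => φ.map_adj_iff.symm)).symm

lemma SimpleGraph.Iso.degSeq_eq {V W : Type*} [Fintype V] [Fintype W] {G : SimpleGraph V}
    {H : SimpleGraph W} (φ : G ≃g H) : degSeq H = degSeq G := by
  have : (univ : Finset W).val = (univ : Finset V).val.map φ := by
    rw [← Finset.univ_map_equiv_to_embedding φ.toEquiv, Finset.map_val]
    rfl
  rw [degSeq, this, Multiset.map_map]
  exact Multiset.map_congr rfl fun v _ => φ.deg_eq v

lemma IsPackingLabel.comp_iso {V W : Type*} {G : SimpleGraph V} {H : SimpleGraph W}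
    {l : V → Fin 3} (hl : IsPackingLabel G l) (φ : H ≃g G) : IsPackingLabel H (l ∘ φ) where
  eq_of_eq_or_adj x p q hp hq hxp hxq := by
    refine φ.injective (hl.eq_of_eq_or_adj (φ x) (φ p) (φ q) hp hq ?_ ?_)
    · simpa [φ.map_adj_iff] using hxp
    · simpa [φ.map_adj_iff] using hxq
  not_adj x p hx hp h := hl.not_adj (φ x) (φ p) hx hp (φ.map_adj_iff.mpr h)

/-- A forest profile is realized on any vertex type of the right size. -/
lemma IsForestProfile.exists_graph {M : Multiset (ℕ × Fin 3)} (hM : IsForestProfile M)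
    {W : Type*} [Fintype W] (hW : Fintype.card W = M.card) :
    ∃ G : SimpleGraph W, G.IsAcyclic ∧ degSeq G = M.map Prod.fst ∧
      M.countP (fun x => x.2 = 2) ≤ domNum G := by
  obtain ⟨V, _, G, l, hG, hl, rfl⟩ := hM
  have hcard : Fintype.card W = Fintype.card V := by
    rw [hW, Multiset.card_map]
    rfl
  let φ : G.comap (Fintype.equivOfCardEq hcard) ≃g G := Iso.comap (Fintype.equivOfCardEq hcard) G
  refine ⟨_, φ.isAcyclic_iff.mpr hG, ?_, ?_⟩
  · rw [← φ.degSeq_eq, Multiset.map_map]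
    rfl
  · refine le_trans (le_of_eq ?_) (hl.comp_iso φ).card_le_domNum
    rw [Multiset.countP_map, Finset.card_def, Finset.filter_val]
    have : (univ : Finset V).val = (univ : Finset W).val.map φ := by
      rw [← Finset.univ_map_equiv_to_embedding φ.toEquiv, Finset.map_val]
      rfl
    rw [this, Multiset.filter_map, Multiset.card_map]
    rfl

lemma card_filter_deg_eq_one {V : Type*} [Fintype V] {G : SimpleGraph V} {d : V → ℕ}
    (h : degSeq G = (univ : Finset V).val.map d) :
    (univ.filter fun v => deg G v = 1).card = (univ.filter fun v => d v = 1).card := by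
  have := congrArg (Multiset.countP (· = 1)) h
  rwa [degSeq, Multiset.countP_map, Multiset.countP_map] at this

end Realization

theorem stmt_8 (n c : ℕ) (hc : 0 < c) (d : Fin n → ℕ) (hmono : Antitone d)
    (hpos : ∀ i, 0 < d i) (hsum : ∑ i, d i = 2 * n - 2 * c)
    (hd1 : ∀ i : Fin n, (i : ℕ) = 0 → 2 ≤ d i)
    (h12 : (Finset.univ.filter fun i => d i = 1).card ≤ (Finset.univ.filter fun i => 2 ≤ d i).card) :
    IsGreatest {k | ∃ G : SimpleGraph (Fin n), G.IsAcyclic ∧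
        degSeq G = Finset.univ.val.map d ∧ domNum G = k}
      ((n + (Finset.univ.filter fun i => d i = 1).card - 2) ⌈/⌉ 3) := by
  have hceil : ∀ x, (n = 0 ∧ x = 0) ∨ 2 ≤ x → (x - 2) ⌈/⌉ 3 = x / 3 := by
    intro x hx
    rw [Nat.ceilDiv_eq_add_pred_div]
    omega
  have hn1 : (univ.filter fun i => d i = 1).card ≤ n := by
    simpa using card_filter_le (univ : Finset (Fin n)) fun i => d i = 1
  have hle : n ≤ ∑ i, d i := by
    have : ∑ _i : Fin n, 1 ≤ ∑ i, d i := sum_le_sum fun i _ => hpos i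
    simp only [sum_const, card_univ, Fintype.card_fin, smul_eq_mul, mul_one] at this
    exact this
  have hsum' : n = 0 ∨ ∑ i, d i + 2 * c = 2 * n := by omega
  have hupper : ∀ G : SimpleGraph (Fin n), G.IsAcyclic → degSeq G = univ.val.map d →
      domNum G ≤ (n + (univ.filter fun i => d i = 1).card) / 3 := by
    intro G hG hd
    have hdeg : ∀ v, 0 < deg G v := by
      intro v
      have hv : deg G v ∈ degSeq G := Multiset.mem_map_of_mem _ (mem_univ_val v)
      rw [hd] at hv
      obtain ⟨i, -, hi⟩ := Multiset.mem_map.mp hv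
      exact hi ▸ hpos i
    have := three_mul_domNum_le hG hdeg
    rw [card_filter_deg_eq_one hd, Fintype.card_fin] at this
    omega
  have hlower : ∃ G : SimpleGraph (Fin n), G.IsAcyclic ∧ degSeq G = univ.val.map d ∧
      (n + (univ.filter fun i => d i = 1).card) / 3 ≤ domNum G := by
    rcases hsum' with rfl | hsum'
    · exact ⟨⊥, isAcyclic_bot, rfl, by simp⟩
    have hcount : ((univ : Finset (Fin n)).val.map d).count 1 =
        (univ.filter fun i => d i = 1).card := by
      rw [Multiset.count_map, Finset.card_def, Finset.filter_val]
      simp only [eq_comm]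
    obtain ⟨M, hM, hMd, hle⟩ := IsForestProfile.exists_of_degrees
      (D := (univ : Finset (Fin n)).val.map d) hc (by simpa using hpos) (hsum'.trans (by simp))
      (by rw [hcount, Multiset.countP_map]; exact h12)
    obtain ⟨G, hG, hGd, hGM⟩ := hM.exists_graph (W := Fin n)
      (by simpa using (congrArg Multiset.card hMd).symm)
    rw [hcount] at hle
    exact ⟨G, hG, hGd.trans hMd, by simpa using hle.trans hGM⟩
  have hvalue : (n + (univ.filter fun i => d i = 1).card - 2) ⌈/⌉ 3 =
      (n + (univ.filter fun i => d i = 1).card) / 3 := by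
    apply hceil
    omega
  rw [hvalue]
  constructor
  · obtain ⟨G, hG, hd, hle⟩ := hlower
    exact ⟨G, hG, hd, le_antisymm (hupper G hG hd) hle⟩
  · rintro k ⟨G, hG, hd, rfl⟩
    exact hupper G hG hd
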